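/- arXiv:1304.3536 — 2 statements merged into one kernel-verified Lean document; each statement's English description precedes it below -/
import Mathlib

section
/- Let ρ ∈ (0,1] and let φ : (0,∞) → ℝ be bounded and uniformly ρ-Hölder continuous. Let ν be a finite Borel measure on (0,∞). Then lim_{N→∞} (1/(N−1)!) ∫_{(0,∞)} ( ∫_0^∞ φ(1/s) ((N−1)sλ)^N e^{−(N−1)sλ} ds/s ) dν(λ) = ∫_{(0,∞)} φ dν, where the limit is over integers N ≥ 2. -/
open MeasureTheory Set Filter

/-!
Up to normalisation, `((N - 1) * s * lam) ^ N * exp (-((N - 1) * s * lam)) / s` is the density of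
the gamma distribution with shape `N` and rate `(N - 1) * lam`. After the substitution `t = s * lam`
the inner integral becomes the expectation of `φ (lam / T)`, where the law of `T` (shape `N`, rate
`N - 1`) no longer depends on `lam`. Its mean `N / (N - 1)` tends to `1` and its variance
`N / (N - 1) ^ 2` to `0`, so `T` concentrates at `1` by Chebyshev's inequality and the expectation
tends to `φ lam`. As it is bounded by `sup |φ|`, dominated convergence applies to the integral
against `ν`.
-/

section

open ProbabilityTheory Topology

lemma continuousOn_of_dist_le_mul_rpow {X Y : Type*} [PseudoMetricSpace X] [PseudoMetricSpace Y]
    {f : X → Y} {s : Set X} {L ρ : ℝ} (hρ : 0 < ρ)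
    (hf : ∀ x ∈ s, ∀ y ∈ s, dist (f x) (f y) ≤ L * dist x y ^ ρ) : ContinuousOn f s := by
  intro x hx
  have hcont : Continuous fun y => L * dist y x ^ ρ :=
    continuous_const.mul ((continuous_id.dist continuous_const).rpow_const fun _ => .inr hρ.le)
  have hlim : Tendsto (fun y => L * dist y x ^ ρ) (𝓝[s] x) (𝓝 0) := by
    simpa [Real.zero_rpow hρ.ne'] using hcont.continuousWithinAt.tendsto (x := x) (s := s)
  rw [ContinuousWithinAt, tendsto_iff_dist_tendsto_zero]
  refine squeeze_zero' (.of_forall fun _ => dist_nonneg) ?_ hlim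
  filter_upwards [self_mem_nhdsWithin] with y hy using hf y hy x hx

section Concentration

variable {α ι : Type*} [MeasurableSpace α] {l : Filter ι} {μ : ι → Measure α} {c : α}

lemma tendsto_measureReal_compl_of_tendsto_integral_dist_sq [PseudoMetricSpace α]
    (hint : ∀ᶠ i in l, Integrable (fun x => dist x c ^ 2) (μ i))
    (hlim : Tendsto (fun i => ∫ x, dist x c ^ 2 ∂μ i) l (𝓝 0)) {U : Set α} (hU : U ∈ 𝓝 c) :
    Tendsto (fun i => (μ i).real Uᶜ) l (𝓝 0) := by
  obtain ⟨δ, hδ, hball⟩ := Metric.mem_nhds_iff.mp hU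
  have hsub : Uᶜ ⊆ {x | δ ^ 2 ≤ dist x c ^ 2} := fun x hx =>
    pow_le_pow_left₀ hδ.le (not_lt.mp fun h => hx (hball h)) 2
  refine squeeze_zero' (.of_forall fun _ => measureReal_nonneg) ?_
    (by simpa only [zero_div] using hlim.div_const (δ ^ 2))
  filter_upwards [hint] with i hi
  have hfin : μ i {x | δ ^ 2 ≤ dist x c ^ 2} ≠ ⊤ := (hi.measure_ge_lt_top (by positivity)).ne
  rw [le_div_iff₀' (by positivity)]
  calc δ ^ 2 * (μ i).real Uᶜ ≤ δ ^ 2 * (μ i).real {x | δ ^ 2 ≤ dist x c ^ 2} := by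
        gcongr
    _ ≤ ∫ x, dist x c ^ 2 ∂μ i :=
        mul_meas_ge_le_integral_of_nonneg (ae_of_all _ fun _ => by positivity) hi _

variable {E : Type*} [NormedAddCommGroup E] [NormedSpace ℝ E] [CompleteSpace E]

lemma norm_integral_sub_le_add_mul_measureReal_compl {μ : Measure α} [IsProbabilityMeasure μ]
    {f : α → E} {y : E} {M ε : ℝ} {U : Set α} (hε : 0 ≤ ε) (hfm : AEStronglyMeasurable f μ)
    (hfM : ∀ᵐ x ∂μ, ‖f x‖ ≤ M) (hU : ∀ x ∈ U, ‖f x - y‖ ≤ ε) :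
    ‖∫ x, f x ∂μ - y‖ ≤ ε + (M + ‖y‖) * μ.real Uᶜ := by
  set V := toMeasurable μ Uᶜ
  have hV : MeasurableSet V := measurableSet_toMeasurable μ Uᶜ
  have hfi : Integrable f μ := .of_bound hfm M hfM
  have hVi : Integrable (V.indicator fun _ => M + ‖y‖) μ := (integrable_const _).indicator hV
  have hpt : ∀ᵐ x ∂μ, ‖f x - y‖ ≤ ε + V.indicator (fun _ => M + ‖y‖) x := by
    filter_upwards [hfM] with x hx
    by_cases hxV : x ∈ V
    · rw [indicator_of_mem hxV]
      linarith [norm_sub_le (f x) y]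
    · rw [indicator_of_notMem hxV, add_zero]
      exact hU x (not_not.mp fun h => hxV (subset_toMeasurable μ Uᶜ h))
  calc ‖∫ x, f x ∂μ - y‖ = ‖∫ x, (f x - y) ∂μ‖ := by
        rw [integral_sub hfi (integrable_const y), integral_const, probReal_univ, one_smul]
    _ ≤ ∫ x, (ε + V.indicator (fun _ => M + ‖y‖) x) ∂μ :=
        norm_integral_le_of_norm_le ((integrable_const ε).add hVi) hpt
    _ = ε + (M + ‖y‖) * μ.real Uᶜ := by
        rw [integral_add (integrable_const ε) hVi, integral_const, integral_indicator_const _ hV,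
          probReal_univ, one_smul, smul_eq_mul, mul_comm, measureReal_def, measure_toMeasurable,
          ← measureReal_def]

lemma tendsto_integral_of_tendsto_measureReal_compl [TopologicalSpace α] {f : α → E} {M : ℝ}
    (hμ : ∀ᶠ i in l, IsProbabilityMeasure (μ i))
    (hconc : ∀ U ∈ 𝓝 c, Tendsto (fun i => (μ i).real Uᶜ) l (𝓝 0)) (hfc : ContinuousAt f c)
    (hfm : ∀ᶠ i in l, AEStronglyMeasurable f (μ i))
    (hfM : ∀ᶠ i in l, ∀ᵐ x ∂μ i, ‖f x‖ ≤ M) :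
    Tendsto (fun i => ∫ x, f x ∂μ i) l (𝓝 (f c)) := by
  rw [Metric.tendsto_nhds]
  intro ε hε
  set U := {x | ‖f x - f c‖ < ε / 2}
  have hU : U ∈ 𝓝 c :=
    (tendsto_iff_norm_sub_tendsto_zero.mp hfc).eventually_lt_const (half_pos hε)
  have hsmall : ∀ᶠ i in l, (M + ‖f c‖) * (μ i).real Uᶜ < ε / 2 :=
    ((hconc U hU).const_mul (M + ‖f c‖)).eventually_lt_const (by simpa using half_pos hε)
  filter_upwards [hμ, hfm, hfM, hsmall] with i _ him hiM hi
  have := norm_integral_sub_le_add_mul_measureReal_compl (half_pos hε).le him hiM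
    (U := U) fun x hx => le_of_lt hx
  rw [dist_eq_norm]
  linarith

end Concentration

section GammaMeasure

lemma ae_pos_gammaMeasure (a r : ℝ) : ∀ᵐ x ∂gammaMeasure a r, 0 < x := by
  have hmeas : Measurable (gammaPDF a r) := (measurable_gammaPDFReal a r).ennreal_ofReal
  rw [gammaMeasure, ae_withDensity_iff hmeas]
  filter_upwards [Measure.ae_ne volume (0 : ℝ)] with x hx0 hpdf
  exact lt_of_le_of_ne (not_lt.mp fun hx => hpdf (gammaPDF_of_neg hx)) hx0.symm

lemma gammaMeasure_restrict_Ioi (a r : ℝ) :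
    (gammaMeasure a r).restrict (Ioi 0) = gammaMeasure a r :=
  Measure.restrict_eq_self_of_ae_mem (ae_pos_gammaMeasure a r)

instance instSFiniteGammaMeasure (a r : ℝ) : SFinite (gammaMeasure a r) :=
  inferInstanceAs (SFinite (volume.withDensity (gammaPDF a r)))

variable {a r : ℝ}

lemma integral_gammaMeasure {E : Type*} [NormedAddCommGroup E] [NormedSpace ℝ E] (ha : 0 < a)
    (hr : 0 < r) (f : ℝ → E) :
    ∫ x, f x ∂gammaMeasure a r
      = ∫ x in Ioi 0, (r ^ a / Real.Gamma a * x ^ (a - 1) * Real.exp (-(r * x))) • f x := by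
  have hmeas : Measurable (gammaPDF a r) := (measurable_gammaPDFReal a r).ennreal_ofReal
  rw [← gammaMeasure_restrict_Ioi, gammaMeasure, setIntegral_withDensity_eq_setIntegral_toReal_smul
    hmeas (ae_of_all _ fun _ => ENNReal.ofReal_lt_top) _ measurableSet_Ioi]
  refine setIntegral_congr_fun measurableSet_Ioi fun x (hx : 0 < x) => ?_
  rw [gammaPDF, ENNReal.toReal_ofReal (gammaPDFReal_nonneg ha hr x), gammaPDFReal, if_pos hx.le]

lemma integral_pow_gammaMeasure (ha : 0 < a) (hr : 0 < r) (n : ℕ) :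
    ∫ x, x ^ n ∂gammaMeasure a r = Real.Gamma (a + n) / (Real.Gamma a * r ^ n) := by
  have hΓ : Real.Gamma a ≠ 0 := (Real.Gamma_pos_of_pos ha).ne'
  have hshift : ∀ x ∈ Ioi (0 : ℝ),
      (r ^ a / Real.Gamma a * x ^ (a - 1) * Real.exp (-(r * x))) • x ^ n
        = r ^ a / Real.Gamma a * (x ^ (a + n - 1) * Real.exp (-(r * x))) := by
    intro x hx
    rw [smul_eq_mul, add_sub_right_comm, Real.rpow_add_natCast (ne_of_gt hx)]
    ring
  rw [integral_gammaMeasure ha hr, setIntegral_congr_fun measurableSet_Ioi hshift,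
    integral_const_mul, Real.integral_rpow_mul_exp_neg_mul_Ioi (by positivity) hr, one_div,
    Real.inv_rpow hr.le, Real.rpow_add_natCast hr.ne']
  field_simp

lemma integrable_pow_gammaMeasure (ha : 0 < a) (hr : 0 < r) (n : ℕ) :
    Integrable (fun x => x ^ n) (gammaMeasure a r) := by
  refine .of_integral_ne_zero ?_
  rw [integral_pow_gammaMeasure ha hr]
  have := Real.Gamma_pos_of_pos ha
  have := Real.Gamma_pos_of_pos (show 0 < a + n by positivity)
  positivity

lemma integral_id_gammaMeasure (ha : 0 < a) (hr : 0 < r) : ∫ x, x ∂gammaMeasure a r = a / r := by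
  have h := integral_pow_gammaMeasure ha hr 1
  have hΓ : Real.Gamma a ≠ 0 := (Real.Gamma_pos_of_pos ha).ne'
  simp only [pow_one, Nat.cast_one, Real.Gamma_add_one ha.ne'] at h
  rw [h]
  field_simp

lemma integral_sq_gammaMeasure (ha : 0 < a) (hr : 0 < r) :
    ∫ x, x ^ 2 ∂gammaMeasure a r = a * (a + 1) / r ^ 2 := by
  have hΓ : Real.Gamma a ≠ 0 := (Real.Gamma_pos_of_pos ha).ne'
  rw [integral_pow_gammaMeasure ha hr, Nat.cast_two, ← one_add_one_eq_two, ← add_assoc,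
    Real.Gamma_add_one (by positivity), Real.Gamma_add_one ha.ne']
  field_simp

lemma integrable_sub_sq_gammaMeasure (ha : 0 < a) (hr : 0 < r) (c : ℝ) :
    Integrable (fun x => (x - c) ^ 2) (gammaMeasure a r) := by
  have := isProbabilityMeasure_gammaMeasure ha hr
  have h1 := (integrable_pow_gammaMeasure ha hr 1).const_mul (2 * c)
  refine (((integrable_pow_gammaMeasure ha hr 2).sub h1).add (integrable_const (c ^ 2))).congr
    (ae_of_all _ fun x => ?_)
  simp only [Pi.add_apply, Pi.sub_apply]
  ring

/-- The variance `a / r ^ 2` plus the square of the bias. -/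
lemma integral_sub_sq_gammaMeasure (ha : 0 < a) (hr : 0 < r) (c : ℝ) :
    ∫ x, (x - c) ^ 2 ∂gammaMeasure a r = a / r ^ 2 + (a / r - c) ^ 2 := by
  have := isProbabilityMeasure_gammaMeasure ha hr
  have h2 := integrable_pow_gammaMeasure ha hr 2
  have h1 : Integrable (fun x => 2 * c * x) (gammaMeasure a r) := by
    simpa only [pow_one] using (integrable_pow_gammaMeasure ha hr 1).const_mul (2 * c)
  have h21 : Integrable (fun x => x ^ 2 - 2 * c * x) (gammaMeasure a r) := h2.sub h1
  calc ∫ x, (x - c) ^ 2 ∂gammaMeasure a r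
      = ∫ x, (x ^ 2 - 2 * c * x + c ^ 2) ∂gammaMeasure a r := by congr! 2; ring
    _ = a * (a + 1) / r ^ 2 - 2 * c * (a / r) + c ^ 2 := by
        rw [integral_add h21 (integrable_const _), integral_sub h2 h1, integral_const_mul,
          integral_sq_gammaMeasure ha hr, integral_id_gammaMeasure ha hr, integral_const,
          probReal_univ, one_smul]
    _ = a / r ^ 2 + (a / r - c) ^ 2 := by field_simp; ring

lemma tendsto_integral_gammaMeasure {E ι : Type*} [NormedAddCommGroup E] [NormedSpace ℝ E]
    [CompleteSpace E] {l : Filter ι} {a r : ι → ℝ} {c M : ℝ} {f : ℝ → E}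
    (ha : ∀ᶠ i in l, 0 < a i) (hr : Tendsto r l atTop)
    (hmean : Tendsto (fun i => a i / r i) l (𝓝 c)) (hfc : ContinuousAt f c)
    (hfm : AEStronglyMeasurable f (volume.restrict (Ioi 0))) (hfM : ∀ x ∈ Ioi 0, ‖f x‖ ≤ M) :
    Tendsto (fun i => ∫ x, f x ∂gammaMeasure (a i) (r i)) l (𝓝 (f c)) := by
  have hpos : ∀ᶠ i in l, 0 < a i ∧ 0 < r i := ha.and (hr.eventually_gt_atTop 0)
  have hmoment : Tendsto (fun i => a i / r i ^ 2 + (a i / r i - c) ^ 2) l (𝓝 0) := by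
    simpa [pow_two, div_mul_eq_div_div] using
      (hmean.div_atTop hr).add ((hmean.sub_const c).pow 2)
  have hconc : ∀ U ∈ 𝓝 c, Tendsto (fun i => (gammaMeasure (a i) (r i)).real Uᶜ) l (𝓝 0) := by
    refine fun U hU => tendsto_measureReal_compl_of_tendsto_integral_dist_sq ?_ ?_ hU
    · filter_upwards [hpos] with i ⟨hai, hri⟩
      simpa only [Real.dist_eq, sq_abs] using integrable_sub_sq_gammaMeasure hai hri c
    · refine hmoment.congr' ?_
      filter_upwards [hpos] with i ⟨hai, hri⟩
      simp only [Real.dist_eq, sq_abs, integral_sub_sq_gammaMeasure hai hri]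
  refine tendsto_integral_of_tendsto_measureReal_compl (M := M) ?_ hconc hfc ?_ ?_
  · exact hpos.mono fun i hi => isProbabilityMeasure_gammaMeasure hi.1 hi.2
  · refine .of_forall fun i => ?_
    rw [← gammaMeasure_restrict_Ioi]
    exact hfm.mono_ac ((withDensity_absolutelyContinuous _ _).restrict _)
  · exact .of_forall fun i => (ae_pos_gammaMeasure _ _).mono hfM

end GammaMeasure

section GammaAverage

variable {E : Type*} [NormedAddCommGroup E] [NormedSpace ℝ E] {φ : ℝ → E}

lemma factorial_smul_integral_gammaMeasure_natCast {n : ℕ} (hn : n ≠ 0) {r : ℝ} (hr : 0 < r)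
    (f : ℝ → E) :
    ((n - 1).factorial : ℝ) • ∫ x, f x ∂gammaMeasure n r
      = ∫ x in Ioi 0, ((r * x) ^ n * Real.exp (-(r * x)) / x) • f x := by
  obtain ⟨m, rfl⟩ := Nat.exists_eq_add_one_of_ne_zero hn
  rw [integral_gammaMeasure (by positivity) hr, ← integral_smul]
  refine setIntegral_congr_fun measurableSet_Ioi fun x (hx : 0 < x) => ?_
  simp only [smul_smul, Nat.add_sub_cancel, Nat.cast_add_one, Real.Gamma_nat_eq_factorial,
    add_sub_cancel_right, Real.rpow_natCast]
  rw [← Nat.cast_add_one, Real.rpow_natCast]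
  congr 1
  field_simp
  ring

lemma integral_pow_mul_exp_div_smul_comp_one_div {n : ℕ} (hn : n ≠ 0) {r lam : ℝ} (hr : 0 < r)
    (hlam : 0 < lam) (φ : ℝ → E) :
    ∫ s in Ioi 0, ((r * s * lam) ^ n * Real.exp (-(r * s * lam)) / s) • φ (1 / s)
      = ((n - 1).factorial : ℝ) • ∫ t, φ (lam / t) ∂gammaMeasure n r := by
  set G : ℝ → E := fun t => ((r * t) ^ n * Real.exp (-(r * t)) / t) • φ (lam / t)
  have hG : ∀ s ∈ Ioi (0 : ℝ),
      ((r * s * lam) ^ n * Real.exp (-(r * s * lam)) / s) • φ (1 / s) = lam • G (s * lam) := by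
    intro s (hs : 0 < s)
    simp only [G, smul_smul, ← mul_assoc, div_mul_cancel_right₀ hlam.ne', one_div]
    congr 1
    field_simp
  rw [setIntegral_congr_fun measurableSet_Ioi hG, integral_smul,
    integral_comp_mul_right_Ioi _ _ hlam, zero_mul, smul_inv_smul₀ hlam.ne',
    factorial_smul_integral_gammaMeasure_natCast hn hr]

lemma aestronglyMeasurable_integral_comp_div_gammaMeasure (hφ : ContinuousOn φ (Ioi 0))
    (ν : Measure ℝ) [SFinite ν] (a r : ℝ) :
    AEStronglyMeasurable (fun lam => ∫ t, φ (lam / t) ∂gammaMeasure a r) (ν.restrict (Ioi 0)) := by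
  have hcont : ContinuousOn (fun p : ℝ × ℝ => φ (p.1 / p.2)) (Ioi 0 ×ˢ Ioi 0) :=
    hφ.comp (continuousOn_fst.div continuousOn_snd fun p hp => ne_of_gt hp.2)
      fun p hp => div_pos (mem_Ioi.mp hp.1) (mem_Ioi.mp hp.2)
  have h := hcont.aestronglyMeasurable (μ := ν.prod (gammaMeasure a r))
    (measurableSet_Ioi.prod measurableSet_Ioi)
  rw [← Measure.prod_restrict, gammaMeasure_restrict_Ioi] at h
  exact h.integral_prod_right'

lemma norm_integral_comp_div_gammaMeasure_le {M a r lam : ℝ} (hφM : ∀ x ∈ Ioi 0, ‖φ x‖ ≤ M)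
    (ha : 0 < a) (hr : 0 < r) (hlam : 0 < lam) : ‖∫ t, φ (lam / t) ∂gammaMeasure a r‖ ≤ M := by
  have := isProbabilityMeasure_gammaMeasure ha hr
  have hle : ∀ᵐ t ∂gammaMeasure a r, ‖φ (lam / t)‖ ≤ M :=
    (ae_pos_gammaMeasure a r).mono fun t ht => hφM _ (div_pos hlam ht)
  simpa only [probReal_univ, mul_one] using norm_integral_le_of_norm_le_const hle

lemma tendsto_integral_comp_div_gammaMeasure_natCast [CompleteSpace E] {M lam : ℝ}
    (hφ : ContinuousOn φ (Ioi 0)) (hφM : ∀ x ∈ Ioi 0, ‖φ x‖ ≤ M) (hlam : 0 < lam) :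
    Tendsto (fun N : ℕ => ∫ t, φ (lam / t) ∂gammaMeasure N (N - 1)) atTop (𝓝 (φ lam)) := by
  have hmaps : MapsTo (fun t => lam / t) (Ioi 0) (Ioi 0) := fun t ht => div_pos hlam (mem_Ioi.mp ht)
  have hcont : ContinuousOn (fun t => φ (lam / t)) (Ioi 0) :=
    hφ.comp (continuousOn_const.div continuousOn_id fun t ht => ne_of_gt ht) hmaps
  have hmean : Tendsto (fun N : ℕ => (N : ℝ) / ((N : ℝ) - 1)) atTop (𝓝 1) := by
    simpa only [sub_eq_add_neg] using tendsto_natCast_div_add_atTop (-1 : ℝ)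
  have h := tendsto_integral_gammaMeasure (M := M)
    ((eventually_gt_atTop 0).mono fun N hN => Nat.cast_pos.mpr hN)
    (tendsto_atTop_add_const_right _ (-1) tendsto_natCast_atTop_atTop) hmean
    (hcont.continuousAt (Ioi_mem_nhds one_pos))
    (hcont.aestronglyMeasurable measurableSet_Ioi) fun t ht => hφM _ (hmaps ht)
  simpa only [div_one, ← sub_eq_add_neg] using h

lemma tendsto_setIntegral_integral_comp_div_gammaMeasure_natCast [CompleteSpace E] {M : ℝ}
    (hφ : ContinuousOn φ (Ioi 0)) (hφM : ∀ x ∈ Ioi 0, ‖φ x‖ ≤ M) (ν : Measure ℝ)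
    [IsFiniteMeasure ν] :
    Tendsto (fun N : ℕ => ∫ lam in Ioi 0, (∫ t, φ (lam / t) ∂gammaMeasure N (N - 1)) ∂ν)
      atTop (𝓝 (∫ lam in Ioi 0, φ lam ∂ν)) := by
  refine tendsto_integral_filter_of_dominated_convergence (fun _ => M)
    (.of_forall fun N => aestronglyMeasurable_integral_comp_div_gammaMeasure hφ ν _ _) ?_
    (integrable_const M) ?_
  · filter_upwards [eventually_gt_atTop 1] with N hN
    have hN' : (1 : ℝ) < N := Nat.one_lt_cast.mpr hN
    filter_upwards [ae_restrict_mem measurableSet_Ioi] with lam hlam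
    exact norm_integral_comp_div_gammaMeasure_le hφM (by positivity) (sub_pos.mpr hN') hlam
  · filter_upwards [ae_restrict_mem measurableSet_Ioi] with lam hlam
    exact tendsto_integral_comp_div_gammaMeasure_natCast hφ hφM hlam

end GammaAverage

theorem stmt_0_general {E : Type*} [NormedAddCommGroup E] [NormedSpace ℝ E] [CompleteSpace E]
    {φ : ℝ → E} {M : ℝ} (hφ : ContinuousOn φ (Ioi 0)) (hφM : ∀ x ∈ Ioi 0, ‖φ x‖ ≤ M)
    (ν : Measure ℝ) [IsFiniteMeasure ν] :
    Tendsto (fun N : ℕ => (1 / ((N - 1).factorial : ℝ)) • ∫ lam in Ioi (0 : ℝ),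
        (∫ s in Ioi (0 : ℝ), ((((N : ℝ) - 1) * s * lam) ^ N *
          Real.exp (-(((N : ℝ) - 1) * s * lam)) / s) • φ (1 / s)) ∂ν)
      atTop (𝓝 (∫ lam in Ioi 0, φ lam ∂ν)) := by
  refine (tendsto_setIntegral_integral_comp_div_gammaMeasure_natCast hφ hφM ν).congr' ?_
  filter_upwards [eventually_gt_atTop 1] with N hN
  have hrate : (0 : ℝ) < N - 1 := sub_pos.mpr (Nat.one_lt_cast.mpr hN)
  have hinner := fun lam (hlam : lam ∈ Ioi (0 : ℝ)) =>
    integral_pow_mul_exp_div_smul_comp_one_div (Nat.ne_zero_of_lt hN) hrate hlam φ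
  rw [setIntegral_congr_fun measurableSet_Ioi hinner, integral_smul, one_div,
    inv_smul_smul₀ (by positivity)]

end

/-- Let `ρ ∈ (0,1]`, `φ : (0,∞) → ℝ` bounded and uniformly `ρ`-Hölder, and `ν` a finite
Borel measure on `(0,∞)`. Then
`(1/(N−1)!) ∫_{(0,∞)} (∫_0^∞ φ(1/s) ((N−1)sλ)^N e^{−(N−1)sλ} ds/s) dν(λ) → ∫_{(0,∞)} φ dν`
as the integer `N → ∞`. -/
theorem stmt_0 (ρ : ℝ) (hρ : ρ ∈ Set.Ioc (0 : ℝ) 1) (φ : ℝ → ℝ) (M L : ℝ)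
    (hbdd : ∀ x ∈ Set.Ioi (0 : ℝ), |φ x| ≤ M)
    (hHol : ∀ x ∈ Set.Ioi (0 : ℝ), ∀ y ∈ Set.Ioi (0 : ℝ), |φ x - φ y| ≤ L * |x - y| ^ ρ)
    (ν : Measure ℝ) [IsFiniteMeasure ν] (hν : ν (Set.Iic 0) = 0) :
    Tendsto (fun N : ℕ =>
      (1 / (Nat.factorial (N - 1) : ℝ)) *
        ∫ lam in Ioi (0 : ℝ),
          (∫ s in Ioi (0 : ℝ),
            φ (1 / s) * (((N : ℝ) - 1) * s * lam) ^ N *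
              Real.exp (-(((N : ℝ) - 1) * s * lam)) / s) ∂ν)
      atTop (nhds (∫ lam in Ioi (0 : ℝ), φ lam ∂ν)) := by
  have hφ : ContinuousOn φ (Ioi 0) := continuousOn_of_dist_le_mul_rpow hρ.1 hHol
  simpa only [smul_eq_mul, mul_comm, mul_div_assoc, mul_assoc] using stmt_0_general hφ hbdd ν
end

section
/- Let k ≥ 1 be an integer, x > 0, and let φ : ℝ → ℝ be a C^∞ function with compact support contained in (0,∞). For an integer N ≥ 1 define K_N : (0,∞) → ℝ by K_N(λ) := (1/N!) · λ^{−1} · (N x / λ)^{N+1} · e^{−N x / λ}. Then lim_{N→∞} ∫_0^∞ φ(λ) · (d^k/dλ^k) K_N(λ) dλ = (−1)^k φ^{(k)}(x). -/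
open MeasureTheory Set Filter

/-! The kernel is the inverse gamma density with shape `N + 1` and scale `N * x`. Its mean is `x`
and its variance `x ^ 2 / (N - 1)` tends to `0`, so by Chebyshev's argument these densities form an
approximate identity at `x`; `k` integrations by parts transfer the derivatives from the kernel to
the test function. -/

section IntegrationByParts

variable {E : Type*} [NormedAddCommGroup E] [NormedSpace ℝ E]

theorem tsupport_iteratedDeriv_subset (k : ℕ) (φ : ℝ → E) :
    tsupport (iteratedDeriv k φ) ⊆ tsupport φ := by
  induction k with
  | zero => rw [iteratedDeriv_zero]
  | succ k ih =>
    rw [iteratedDeriv_succ]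
    exact tsupport_deriv_subset.trans ih

theorem hasCompactSupport_iteratedDeriv {φ : ℝ → E} (hφ : HasCompactSupport φ) (k : ℕ) :
    HasCompactSupport (iteratedDeriv k φ) :=
  hφ.of_isClosed_subset (isClosed_tsupport _) (tsupport_iteratedDeriv_subset k φ)

theorem integrable_smul_of_tsupport_subset {X : Type*} [TopologicalSpace X] [T2Space X]
    [MeasurableSpace X] [OpensMeasurableSpace X] {μ : Measure X} [IsFiniteMeasureOnCompacts μ]
    {U : Set X} {f : X → ℝ} {φ : X → E} (hf : ContinuousOn f U) (hφ : Continuous φ)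
    (hφc : HasCompactSupport φ) (hφU : tsupport φ ⊆ U) :
    Integrable (fun t ↦ f t • φ t) μ := by
  have hcont : ContinuousOn (fun t ↦ f t • φ t) (tsupport φ) :=
    (hf.mono hφU).smul hφ.continuousOn
  refine (integrableOn_iff_integrable_of_support_subset ?_).1 (hcont.integrableOn_compact hφc)
  exact (Function.support_smul_subset_right f φ).trans (subset_tsupport φ)

theorem hasDerivAt_smul_of_tsupport_subset {U : Set ℝ} {f : ℝ → ℝ} {φ : ℝ → E} (hU : IsOpen U)
    (hf : DifferentiableOn ℝ f U) (hφ : Differentiable ℝ φ) (hφU : tsupport φ ⊆ U) (t : ℝ) :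
    HasDerivAt (fun t ↦ f t • φ t) (f t • deriv φ t + deriv f t • φ t) t := by
  by_cases ht : t ∈ tsupport φ
  · exact (hf.differentiableAt (hU.mem_nhds (hφU ht))).hasDerivAt.smul (hφ t).hasDerivAt
  · have hφ0 : φ =ᶠ[nhds t] 0 := notMem_tsupport_iff_eventuallyEq.1 ht
    have hfφ0 : (fun t ↦ f t • φ t) =ᶠ[nhds t] fun _ ↦ 0 := by
      filter_upwards [hφ0] with u hu
      rw [hu, Pi.zero_apply, smul_zero]
    have hvalue : f t • deriv φ t + deriv f t • φ t = 0 := by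
      simp [hφ0.deriv_eq, hφ0.eq_of_nhds]
    rw [hvalue]
    exact (hasDerivAt_const t 0).congr_of_eventuallyEq hfφ0

variable {U : Set ℝ} {f : ℝ → ℝ} {φ : ℝ → E}

theorem setIntegral_deriv_smul_eq_neg (hU : IsOpen U) (hf : ContDiffOn ℝ 1 f U)
    (hφ : ContDiff ℝ 1 φ) (hφc : HasCompactSupport φ) (hφU : tsupport φ ⊆ U) :
    ∫ t in U, deriv f t • φ t = -∫ t in U, f t • deriv φ t := by
  have hφ'U : tsupport (deriv φ) ⊆ U := tsupport_deriv_subset.trans hφU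
  have hfφ : Integrable fun t ↦ f t • φ t :=
    integrable_smul_of_tsupport_subset hf.continuousOn hφ.continuous hφc hφU
  have hfφ' : Integrable fun t ↦ f t • deriv φ t :=
    integrable_smul_of_tsupport_subset hf.continuousOn (hφ.continuous_deriv le_rfl) hφc.deriv hφ'U
  have hf'φ : Integrable fun t ↦ deriv f t • φ t :=
    integrable_smul_of_tsupport_subset (hf.continuousOn_deriv_of_isOpen hU le_rfl) hφ.continuous
      hφc hφU
  have hzero : ∫ t, (f t • deriv φ t + deriv f t • φ t) = 0 :=
    integral_eq_zero_of_hasDerivAt_of_integrable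
      (hasDerivAt_smul_of_tsupport_subset hU (hf.differentiableOn one_ne_zero)
        (hφ.differentiable one_ne_zero) hφU)
      (hfφ'.add hf'φ) hfφ
  rw [integral_add hfφ' hf'φ] at hzero
  have hleft : ∀ t ∉ U, deriv f t • φ t = 0 := fun t ht ↦ by
    rw [image_eq_zero_of_notMem_tsupport (notMem_subset hφU ht), smul_zero]
  have hright : ∀ t ∉ U, f t • deriv φ t = 0 := fun t ht ↦ by
    rw [image_eq_zero_of_notMem_tsupport (notMem_subset hφ'U ht), smul_zero]
  rw [setIntegral_eq_integral_of_forall_compl_eq_zero hleft,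
    setIntegral_eq_integral_of_forall_compl_eq_zero hright]
  exact eq_neg_of_add_eq_zero_right hzero

theorem setIntegral_iteratedDeriv_smul (hU : IsOpen U) {k : ℕ} (hf : ContDiffOn ℝ k f U)
    (hφ : ContDiff ℝ k φ) (hφc : HasCompactSupport φ) (hφU : tsupport φ ⊆ U) :
    ∫ t in U, iteratedDeriv k f t • φ t = (-1 : ℝ) ^ k • ∫ t in U, f t • iteratedDeriv k φ t := by
  induction k generalizing f with
  | zero => simp only [iteratedDeriv_zero, pow_zero, one_smul]
  | succ k ih =>
    obtain ⟨hφk, hφk1⟩ := contDiff_nat_succ_iff_contDiff_one_iteratedDeriv.1 hφ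
    have hf' : ContDiffOn ℝ k (deriv f) U := hf.deriv_of_isOpen hU (by norm_cast)
    have hf1 : ContDiffOn ℝ 1 f U := hf.of_le (by norm_cast; omega)
    calc ∫ t in U, iteratedDeriv (k + 1) f t • φ t
        = (-1 : ℝ) ^ k • ∫ t in U, deriv f t • iteratedDeriv k φ t := by
          rw [iteratedDeriv_succ', ih hf' hφk]
      _ = (-1 : ℝ) ^ (k + 1) • ∫ t in U, f t • iteratedDeriv (k + 1) φ t := by
          rw [setIntegral_deriv_smul_eq_neg hU hf1 hφk1 (hasCompactSupport_iteratedDeriv hφc k)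
            ((tsupport_iteratedDeriv_subset k φ).trans hφU), ← iteratedDeriv_succ, pow_succ,
            mul_neg_one, neg_smul, smul_neg]

end IntegrationByParts

section ApproximateIdentity

variable {α E : Type*} [NormedAddCommGroup E]

theorem exists_norm_sub_le_add_mul_dist_pow [PseudoMetricSpace α] {g : α → E} {x : α} {C ε : ℝ}
    (p : ℕ) (hgC : ∀ t, ‖g t‖ ≤ C) (hgx : ContinuousAt g x) (hε : 0 < ε) :
    ∃ A, ∀ t, ‖g t - g x‖ ≤ ε + A * dist t x ^ p := by
  obtain ⟨δ, hδ, hnear⟩ := Metric.continuousAt_iff.1 hgx ε hε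
  have hC : 0 ≤ C := (norm_nonneg _).trans (hgC x)
  refine ⟨2 * C / δ ^ p, fun t ↦ ?_⟩
  rcases lt_or_ge (dist t x) δ with ht | ht
  · have hclose : ‖g t - g x‖ < ε := by simpa only [dist_eq_norm] using hnear ht
    have : 0 ≤ 2 * C / δ ^ p * dist t x ^ p := by positivity
    linarith
  · calc ‖g t - g x‖ ≤ C + C := (norm_sub_le _ _).trans (add_le_add (hgC t) (hgC x))
      _ = 2 * C / δ ^ p * δ ^ p := by field_simp; ring
      _ ≤ 2 * C / δ ^ p * dist t x ^ p := by gcongr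
      _ ≤ ε + 2 * C / δ ^ p * dist t x ^ p := le_add_of_nonneg_left hε.le

variable [MeasurableSpace α] {μ : Measure α} [NormedSpace ℝ E] [CompleteSpace E]

theorem norm_integral_smul_sub_le {K V : α → ℝ} {g : α → E} {c : E} {A ε : ℝ}
    (hK : 0 ≤ᵐ[μ] K) (hK1 : ∫ t, K t ∂μ = 1) (hKg : Integrable (fun t ↦ K t • g t) μ)
    (hVK : Integrable (fun t ↦ V t * K t) μ) (hgV : ∀ t, ‖g t - c‖ ≤ ε + A * V t) :
    ‖∫ t, K t • g t ∂μ - c‖ ≤ ε + A * ∫ t, V t * K t ∂μ := by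
  have hKi : Integrable K μ := integrable_of_integral_eq_one hK1
  calc ‖∫ t, K t • g t ∂μ - c‖ = ‖∫ t, K t • (g t - c) ∂μ‖ := by
        simp only [smul_sub]
        rw [integral_sub hKg (hKi.smul_const c), integral_smul_const, hK1, one_smul]
    _ ≤ ∫ t, (ε * K t + A * (V t * K t)) ∂μ := by
        refine norm_integral_le_of_norm_le ((hKi.const_mul ε).add (hVK.const_mul A)) ?_
        filter_upwards [hK] with t (ht : 0 ≤ K t)
        calc ‖K t • (g t - c)‖ = K t * ‖g t - c‖ := by rw [norm_smul, Real.norm_of_nonneg ht]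
          _ ≤ K t * (ε + A * V t) := mul_le_mul_of_nonneg_left (hgV t) ht
          _ = ε * K t + A * (V t * K t) := by ring
    _ = ε + A * ∫ t, V t * K t ∂μ := by
        rw [integral_add (hKi.const_mul ε) (hVK.const_mul A), integral_const_mul,
          integral_const_mul, hK1, mul_one]

theorem tendsto_integral_smul_of_tendsto_moment [PseudoMetricSpace α] {ι : Type*} {l : Filter ι}
    {K : ι → α → ℝ} {g : α → E} {x : α} {C : ℝ} (p : ℕ)
    (hK : ∀ᶠ i in l, 0 ≤ᵐ[μ] K i) (hK1 : ∀ᶠ i in l, ∫ t, K i t ∂μ = 1)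
    (hKp : ∀ᶠ i in l, Integrable (fun t ↦ dist t x ^ p * K i t) μ)
    (hlim : Tendsto (fun i ↦ ∫ t, dist t x ^ p * K i t ∂μ) l (nhds 0))
    (hg : AEStronglyMeasurable g μ) (hgC : ∀ t, ‖g t‖ ≤ C) (hgx : ContinuousAt g x) :
    Tendsto (fun i ↦ ∫ t, K i t • g t ∂μ) l (nhds (g x)) := by
  refine Metric.tendsto_nhds.2 fun ε hε ↦ ?_
  obtain ⟨A, hA⟩ := exists_norm_sub_le_add_mul_dist_pow p hgC hgx (half_pos hε)
  have hbound : Tendsto (fun i ↦ ε / 2 + A * ∫ t, dist t x ^ p * K i t ∂μ) l (nhds (ε / 2)) := by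
    simpa only [mul_zero, add_zero] using (hlim.const_mul A).const_add (ε / 2)
  filter_upwards [hK, hK1, hKp, hbound.eventually_lt_const (half_lt_self hε)]
    with i hKi hKi1 hKip hlt
  have hKg : Integrable (fun t ↦ K i t • g t) μ :=
    (integrable_of_integral_eq_one hKi1).smul_bdd C hg (Eventually.of_forall hgC)
  rw [dist_eq_norm]
  exact (norm_integral_smul_sub_le hKi hKi1 hKg hKip hA).trans_lt hlt

end ApproximateIdentity

section InverseGamma

/-- The density on `(0, ∞)` of the inverse gamma distribution with shape `a` and scale `c`.
The usual `c ^ a * t ^ (-a - 1)` is written `t⁻¹ * (c / t) ^ a`, and no indicator of `(0, ∞)` is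
included, so the values at `t ≤ 0` are junk. -/
noncomputable def invGammaPDFReal (a c t : ℝ) : ℝ :=
  (Real.Gamma a)⁻¹ * t⁻¹ * (c / t) ^ a * Real.exp (-(c / t))

variable {a c t : ℝ}

theorem invGammaPDFReal_natCast_add_one (N : ℕ) (c : ℝ) :
    invGammaPDFReal (N + 1) c = fun t ↦
      1 / (N.factorial : ℝ) * t⁻¹ * (c / t) ^ (N + 1) * Real.exp (-(c / t)) := by
  funext t
  rw [invGammaPDFReal, Real.Gamma_nat_eq_factorial, one_div, ← Nat.cast_add_one,
    Real.rpow_natCast]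

theorem invGammaPDFReal_nonneg (ha : 0 < a) (hc : 0 ≤ c) (ht : 0 ≤ t) :
    0 ≤ invGammaPDFReal a c t := by
  have := Real.Gamma_pos_of_pos ha
  unfold invGammaPDFReal
  positivity

theorem contDiffOn_invGammaPDFReal {n : WithTop ℕ∞} (a : ℝ) (hc : c ≠ 0) :
    ContDiffOn ℝ n (invGammaPDFReal a c) (Ioi 0) := by
  have hinv : ContDiffOn ℝ n (fun t : ℝ ↦ t⁻¹) (Ioi 0) :=
    contDiffOn_id.inv fun t ht ↦ ne_of_gt ht
  have hdiv : ContDiffOn ℝ n (fun t : ℝ ↦ c / t) (Ioi 0) := by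
    simpa only [div_eq_mul_inv] using contDiffOn_const.mul hinv
  have hpow : ContDiffOn ℝ n (fun t : ℝ ↦ (c / t) ^ a) (Ioi 0) :=
    hdiv.rpow_const_of_ne fun t ht ↦ div_ne_zero hc (ne_of_gt ht)
  exact ((contDiffOn_const.mul hinv).mul hpow).mul hdiv.neg.exp

theorem integral_invGammaPDFReal (ha : 0 < a) (hc : 0 < c) :
    ∫ t in Ioi 0, invGammaPDFReal a c t = 1 := by
  let q : ℝ → ℝ := fun u ↦ c ^ a / Real.Gamma a * (u ^ (a - 1) * Real.exp (-(c * u)))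
  have hsubst : EqOn (invGammaPDFReal a c)
      (fun t ↦ (|(-1 : ℝ)| * t ^ (-1 - 1 : ℝ)) • q (t ^ (-1 : ℝ))) (Ioi 0) := by
    intro t (ht : 0 < t)
    have hsq : t ^ (-1 - 1 : ℝ) = t⁻¹ * t⁻¹ := by
      rw [Real.rpow_sub_one ht.ne', Real.rpow_neg_one, div_eq_mul_inv]
    have hpow : (c / t) ^ a = c ^ a * ((t⁻¹) ^ (a - 1) * t⁻¹) := by
      rw [div_eq_mul_inv, Real.mul_rpow hc.le (inv_nonneg.2 ht.le),
        Real.rpow_sub_one (inv_ne_zero ht.ne'), div_mul_cancel₀ _ (inv_ne_zero ht.ne')]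
    rw [invGammaPDFReal, hpow]
    simp only [q, hsq, Real.rpow_neg_one, smul_eq_mul, abs_neg, abs_one, div_eq_mul_inv]
    ring
  have hΓ : Real.Gamma a ≠ 0 := (Real.Gamma_pos_of_pos ha).ne'
  have hca : c ^ a ≠ 0 := (Real.rpow_pos_of_pos hc a).ne'
  rw [setIntegral_congr_fun measurableSet_Ioi hsubst, integral_comp_rpow_Ioi q (by norm_num),
    integral_const_mul, Real.integral_rpow_mul_exp_neg_mul_Ioi ha hc, one_div,
    Real.inv_rpow hc.le]
  field_simp

theorem pow_mul_invGammaPDFReal {n : ℕ} (hn : n < a) (hc : c ≠ 0) (ht : t ≠ 0) :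
    t ^ n * invGammaPDFReal a c t =
      c ^ n * Real.Gamma (a - n) / Real.Gamma a * invGammaPDFReal (a - n) c t := by
  have hΓ : Real.Gamma (a - n) ≠ 0 := (Real.Gamma_pos_of_pos (sub_pos.2 hn)).ne'
  rw [invGammaPDFReal, invGammaPDFReal, Real.rpow_sub_natCast (div_ne_zero hc ht), div_pow]
  field_simp

theorem eqOn_pow_mul_invGammaPDFReal {n : ℕ} (hn : n < a) (hc : c ≠ 0) :
    EqOn (fun t ↦ t ^ n * invGammaPDFReal a c t)
      (fun t ↦ c ^ n * Real.Gamma (a - n) / Real.Gamma a * invGammaPDFReal (a - n) c t)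
      (Ioi 0) :=
  fun _ ht ↦ pow_mul_invGammaPDFReal hn hc (ne_of_gt ht)

theorem integrableOn_pow_mul_invGammaPDFReal {n : ℕ} (hn : n < a) (hc : 0 < c) :
    IntegrableOn (fun t ↦ t ^ n * invGammaPDFReal a c t) (Ioi 0) := by
  rw [integrableOn_congr_fun (eqOn_pow_mul_invGammaPDFReal hn hc.ne') measurableSet_Ioi]
  exact (integrable_of_integral_eq_one
    (integral_invGammaPDFReal (sub_pos.2 hn) hc)).const_mul _

theorem integral_pow_mul_invGammaPDFReal {n : ℕ} (hn : n < a) (hc : 0 < c) :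
    ∫ t in Ioi 0, t ^ n * invGammaPDFReal a c t =
      c ^ n * Real.Gamma (a - n) / Real.Gamma a := by
  rw [setIntegral_congr_fun measurableSet_Ioi (eqOn_pow_mul_invGammaPDFReal hn hc.ne'),
    integral_const_mul, integral_invGammaPDFReal (sub_pos.2 hn) hc, mul_one]

theorem integral_id_mul_invGammaPDFReal (ha : 1 < a) (hc : 0 < c) :
    ∫ t in Ioi 0, t * invGammaPDFReal a c t = c / (a - 1) := by
  have hΓ : Real.Gamma a = (a - 1) * Real.Gamma (a - 1) := by
    simpa only [sub_add_cancel] using Real.Gamma_add_one (sub_pos.2 ha).ne'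
  have hΓ_ne : Real.Gamma (a - 1) ≠ 0 := (Real.Gamma_pos_of_pos (sub_pos.2 ha)).ne'
  have hmoment := integral_pow_mul_invGammaPDFReal (n := 1) (by exact_mod_cast ha) hc
  simp only [pow_one, Nat.cast_one] at hmoment
  rw [hmoment, hΓ, mul_div_mul_right _ _ hΓ_ne]

theorem integral_sq_mul_invGammaPDFReal (ha : 2 < a) (hc : 0 < c) :
    ∫ t in Ioi 0, t ^ 2 * invGammaPDFReal a c t = c ^ 2 / ((a - 1) * (a - 2)) := by
  have hΓ : Real.Gamma a = (a - 1) * (a - 2) * Real.Gamma (a - 2) := by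
    have h1 := Real.Gamma_add_one (s := a - 1) (by linarith)
    have h2 := Real.Gamma_add_one (s := a - 2) (by linarith)
    rw [sub_add_cancel] at h1
    rw [show a - 2 + 1 = a - 1 by ring] at h2
    rw [h1, h2, mul_assoc]
  have hΓ_ne : Real.Gamma (a - 2) ≠ 0 := (Real.Gamma_pos_of_pos (sub_pos.2 ha)).ne'
  have hmoment := integral_pow_mul_invGammaPDFReal (n := 2) (by exact_mod_cast ha) hc
  rw [Nat.cast_ofNat] at hmoment
  rw [hmoment, hΓ, mul_div_mul_right _ _ hΓ_ne]

theorem integral_sub_mean_sq_mul_invGammaPDFReal (ha : 2 < a) (hc : 0 < c) :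
    ∫ t in Ioi 0, (t - c / (a - 1)) ^ 2 * invGammaPDFReal a c t =
      c ^ 2 / ((a - 1) ^ 2 * (a - 2)) := by
  set m := c / (a - 1) with hm
  have ha0 : 0 < a := by linarith
  have ha1 : 1 < a := by linarith
  have hmass := integral_invGammaPDFReal ha0 hc
  have hint0 : IntegrableOn (invGammaPDFReal a c) (Ioi 0) := integrable_of_integral_eq_one hmass
  have hint1 : IntegrableOn (fun t ↦ t * invGammaPDFReal a c t) (Ioi 0) := by
    simpa only [pow_one] using
      integrableOn_pow_mul_invGammaPDFReal (n := 1) (by exact_mod_cast ha1) hc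
  have hint2 : IntegrableOn (fun t ↦ t ^ 2 * invGammaPDFReal a c t) (Ioi 0) :=
    integrableOn_pow_mul_invGammaPDFReal (by exact_mod_cast ha) hc
  have hint21 : IntegrableOn (fun t ↦ t ^ 2 * invGammaPDFReal a c t -
      2 * m * (t * invGammaPDFReal a c t)) (Ioi 0) := hint2.sub (hint1.const_mul _)
  calc ∫ t in Ioi 0, (t - m) ^ 2 * invGammaPDFReal a c t
      = ∫ t in Ioi 0, (t ^ 2 * invGammaPDFReal a c t - 2 * m * (t * invGammaPDFReal a c t) +
          m ^ 2 * invGammaPDFReal a c t) := by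
        congr 1 with t
        ring
    _ = c ^ 2 / ((a - 1) * (a - 2)) - 2 * m * m + m ^ 2 * 1 := by
        rw [integral_add hint21 (hint0.const_mul _), integral_sub hint2 (hint1.const_mul _),
          integral_const_mul, integral_const_mul, integral_sq_mul_invGammaPDFReal ha hc,
          integral_id_mul_invGammaPDFReal ha1 hc, hmass]
    _ = c ^ 2 / ((a - 1) ^ 2 * (a - 2)) := by
        have ha1_ne : a - 1 ≠ 0 := by linarith
        have ha2_ne : a - 2 ≠ 0 := by linarith
        rw [hm]
        field_simp
        ring

theorem integral_sub_sq_mul_invGammaPDFReal_add_one {s x : ℝ} (hs : 1 < s) (hx : 0 < x) :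
    ∫ t in Ioi 0, (t - x) ^ 2 * invGammaPDFReal (s + 1) (s * x) t = x ^ 2 / (s - 1) := by
  have hs0 : 0 < s := one_pos.trans hs
  have hvar := integral_sub_mean_sq_mul_invGammaPDFReal (a := s + 1) (by linarith) (mul_pos hs0 hx)
  rw [add_sub_cancel_right, mul_div_cancel_left₀ x hs0.ne'] at hvar
  rw [hvar, show s + 1 - 2 = s - 1 by ring, mul_pow, mul_div_mul_left _ _ (pow_ne_zero 2 hs0.ne')]

end InverseGamma

section Limit

variable {E : Type*} [NormedAddCommGroup E] [NormedSpace ℝ E] [CompleteSpace E] {x : ℝ}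

theorem tendsto_integral_invGammaPDFReal_smul {g : ℝ → E} {C : ℝ} (hx : 0 < x)
    (hg : AEStronglyMeasurable g (volume.restrict (Ioi 0))) (hgC : ∀ t, ‖g t‖ ≤ C)
    (hgx : ContinuousAt g x) :
    Tendsto (fun s ↦ ∫ t in Ioi 0, invGammaPDFReal (s + 1) (s * x) t • g t) atTop
      (nhds (g x)) := by
  refine tendsto_integral_smul_of_tendsto_moment 2 ?_ ?_ ?_ ?_ hg hgC hgx
  · filter_upwards [eventually_gt_atTop 0] with s hs
    filter_upwards [ae_restrict_mem measurableSet_Ioi] with t (ht : 0 < t)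
    exact invGammaPDFReal_nonneg (by positivity) (by positivity) ht.le
  · filter_upwards [eventually_gt_atTop 0] with s hs
    exact integral_invGammaPDFReal (by positivity) (by positivity)
  · filter_upwards [eventually_gt_atTop 1] with s hs
    simp only [Real.dist_eq, sq_abs]
    -- The integral is nonzero, which Bochner's convention allows only for integrable functions.
    refine Integrable.of_integral_ne_zero ?_
    rw [integral_sub_sq_mul_invGammaPDFReal_add_one hs hx]
    exact (div_pos (pow_pos hx 2) (sub_pos.2 hs)).ne'
  · have hvar : Tendsto (fun s : ℝ ↦ x ^ 2 / (s - 1)) atTop (nhds 0) :=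
      (tendsto_atTop_add_const_right atTop (-1) tendsto_id).const_div_atTop (x ^ 2)
    refine hvar.congr' ?_
    filter_upwards [eventually_gt_atTop 1] with s hs
    simp only [Real.dist_eq, sq_abs, integral_sub_sq_mul_invGammaPDFReal_add_one hs hx]

theorem stmt_16_general {k : ℕ} {φ : ℝ → E} (hx : 0 < x) (hφ : ContDiff ℝ k φ)
    (hφc : HasCompactSupport φ) (hφs : tsupport φ ⊆ Ioi 0) :
    Tendsto (fun s ↦ ∫ t in Ioi 0, iteratedDeriv k (invGammaPDFReal (s + 1) (s * x)) t • φ t)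
      atTop (nhds ((-1 : ℝ) ^ k • iteratedDeriv k φ x)) := by
  have hcont : Continuous (iteratedDeriv k φ) := hφ.continuous_iteratedDeriv' k
  obtain ⟨C, hC⟩ :=
    hcont.bounded_above_of_compact_support (hasCompactSupport_iteratedDeriv hφc k)
  refine ((tendsto_integral_invGammaPDFReal_smul hx hcont.aestronglyMeasurable hC
    hcont.continuousAt).const_smul ((-1 : ℝ) ^ k)).congr' ?_
  filter_upwards [eventually_gt_atTop 0] with s hs
  exact (setIntegral_iteratedDeriv_smul isOpen_Ioi
    (contDiffOn_invGammaPDFReal (s + 1) (mul_pos hs hx).ne') hφ hφc hφs).symm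

end Limit

/-- Let `k ≥ 1` be an integer, `x > 0`, and `φ : ℝ → ℝ` a `C^∞` function with compact
support contained in `(0,∞)`. With
`K_N(λ) := (1/N!) λ⁻¹ (Nx/λ)^{N+1} e^{−Nx/λ}`, one has
`∫_0^∞ φ(λ) (d^k/dλ^k) K_N(λ) dλ → (−1)^k φ^{(k)}(x)` as the integer `N → ∞`. -/
theorem stmt_16 (k : ℕ) (hk : 1 ≤ k) (x : ℝ) (hx : 0 < x)
    (φ : ℝ → ℝ) (hφ : ContDiff ℝ (⊤ : ℕ∞) φ) (hφc : HasCompactSupport φ)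
    (hφs : tsupport φ ⊆ Set.Ioi 0) :
    Tendsto (fun N : ℕ =>
      ∫ lam in Ioi (0 : ℝ),
        φ lam *
          iteratedDeriv k
            (fun μ : ℝ =>
              (1 / (Nat.factorial N : ℝ)) * μ⁻¹ * ((N : ℝ) * x / μ) ^ (N + 1) *
                Real.exp (-((N : ℝ) * x / μ))) lam)
      atTop (nhds ((-1 : ℝ) ^ k * iteratedDeriv k φ x)) := by
  simpa only [Function.comp_def, invGammaPDFReal_natCast_add_one, smul_eq_mul, mul_comm (φ _)] using
    (stmt_16_general (k := k) hx (hφ.of_le (by exact_mod_cast le_top)) hφc hφs).comp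
      tendsto_natCast_atTop_atTop
end
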